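/- arXiv:1409.3802 — 3 statements merged into one kernel-verified Lean document; each statement's English description precedes it below -/
import Mathlib

section
/- Let k be an algebraically closed field, n ≥ 1 an integer, R = k[x_0,…,x_n] with the standard grading, and I ⊆ R a homogeneous prime ideal such that the Krull dimension of R/I equals κ+1 for some integer κ ≥ 0. Then for every integer d ≥ 0, the k-vector space dimension of the degree-d graded piece of R/I is at least binom(d+κ, κ); equivalently, the k-subspace of degree-d homogeneous polynomials lying in I has codimension at least binom(d+κ, κ) in the binom(n+d, n)-dimensional space of all degree-d homogeneous polynomials. -/
open MvPolynomial

/-- Noether normalization plus incomparability: the Krull dimension of a finitely generated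
domain is bounded by the size of any transcendence basis. -/
lemma dim_le_card_basis (k : Type) [Field k] (A : Type) [CommRing A] [IsDomain A] [Algebra k A]
    [Algebra.FiniteType k A] (t : Set A) (ht : IsTranscendenceBasis k ((↑) : t → A)) (m : ℕ)
    (hdim : ringKrullDim A = ((m : ℕ) : WithBot (WithTop ℕ))) :
    ((m : ℕ) : Cardinal) ≤ Cardinal.mk t := by
  obtain ⟨s, g, hinj, hint⟩ := exists_integral_inj_algHom_of_fg k A
  algebraize [g.toRingHom]
  have hfs : FaithfulSMul (MvPolynomial (Fin s) k) A :=
    (faithfulSMul_iff_algebraMap_injective _ _).mpr hinj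
  have h1 : ringKrullDim A ≤ ringKrullDim (MvPolynomial (Fin s) k) := by
    refine Order.krullDim_le_of_strictMono
      (PrimeSpectrum.comap (algebraMap (MvPolynomial (Fin s) k) A)) ?_
    intro p q hpq
    exact Ideal.IsIntegral.comap_lt_comap (R := MvPolynomial (Fin s) k) (I := p.asIdeal)
      (J := q.asIdeal) hpq
  rw [MvPolynomial.ringKrullDim_of_isNoetherianRing, hdim, ringKrullDim_eq_zero_of_field,
    Nat.card_fin, zero_add] at h1
  have h2 : m ≤ s := WithTop.coe_le_coe.mp (WithBot.coe_le_coe.mp h1)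
  have hb : IsTranscendenceBasis k (algebraMap (MvPolynomial (Fin s) k) A ∘ X) :=
    (IsTranscendenceBasis.mvPolynomial (Fin s) k).algebraMap_comp
  have h3 := ht.cardinalMk_eq hb
  rw [h3]
  simpa using h2

lemma exists_indep_vars (k : Type) [Field k] (n : ℕ)
    (I : Ideal (MvPolynomial (Fin n) k)) (hprime : I.IsPrime) (m : ℕ)
    (hdim : ringKrullDim (MvPolynomial (Fin n) k ⧸ I) = ((m : ℕ) : WithBot (WithTop ℕ))) :
    ∃ j : Fin m → Fin n,
      AlgebraicIndependent k (fun i => Ideal.Quotient.mkₐ k I (X (j i))) := by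
  set x : Fin n → MvPolynomial (Fin n) k ⧸ I := fun i => Ideal.Quotient.mkₐ k I (X i) with hx
  have htop : Algebra.adjoin k (Set.range x) = ⊤ := by
    have : Set.range x = (Ideal.Quotient.mkₐ k I) '' (Set.range X) := by
      rw [← Set.range_comp]; rfl
    rw [this, ← AlgHom.map_adjoin, MvPolynomial.adjoin_range_X, Algebra.map_top,
      AlgHom.range_eq_top]
    exact Ideal.Quotient.mkₐ_surjective k I
  have halg : Algebra.IsAlgebraic (Algebra.adjoin k (Set.range x))
      (MvPolynomial (Fin n) k ⧸ I) := by
    rw [htop]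
    exact ⟨fun a => isAlgebraic_algebraMap
      (⟨a, trivial⟩ : (⊤ : Subalgebra k (MvPolynomial (Fin n) k ⧸ I)))⟩
  obtain ⟨t, hts, ht⟩ := exists_isTranscendenceBasis_subset (R := k) (Set.range x)
  have hcard := dim_le_card_basis k _ t ht m hdim
  have hcard' : Cardinal.mk (Fin m) ≤ Cardinal.mk t := by simpa using hcard
  obtain ⟨e⟩ := hcard'
  choose j hj using fun i => hts (e i).2
  refine ⟨j, ?_⟩
  have h := ht.1.comp e e.injective
  convert h using 1
  funext i
  exact hj i

/-- Let `I` be a homogeneous prime ideal of `R = k[x_0, …, x_n]` (homogeneity stated as: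
`I` contains all homogeneous components of each of its elements) such that the Krull
dimension of `R/I` is `κ+1`.  Then for every `d ≥ 0`, the degree-`d` graded piece of
`R/I` has `k`-dimension at least `binom(d+κ, κ)`; equivalently, the subspace of degree-`d`
homogeneous polynomials lying in `I` has codimension at least `binom(d+κ, κ)` in the
space of all degree-`d` homogeneous polynomials.  The codimension is expressed as the
`finrank` of the quotient of the degree-`d` homogeneous piece of `R` by the subspace of
elements of `I`. -/
theorem stmt4 (k : Type) [Field k] [IsAlgClosed k] (n : ℕ) (hn : 1 ≤ n)
    (I : Ideal (MvPolynomial (Fin (n+1)) k)) (hprime : I.IsPrime)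
    (hhom : ∀ f ∈ I, ∀ i : ℕ, MvPolynomial.homogeneousComponent i f ∈ I)
    (κ : ℕ)
    (hdim : ringKrullDim (MvPolynomial (Fin (n+1)) k ⧸ I) = ((κ+1 : ℕ) : WithBot (WithTop ℕ)))
    (d : ℕ) :
    (d + κ).choose κ ≤
      Module.finrank k
        ((MvPolynomial.homogeneousSubmodule (Fin (n+1)) k d) ⧸
          (Submodule.comap (MvPolynomial.homogeneousSubmodule (Fin (n+1)) k d).subtype
            (Submodule.restrictScalars k I))) := by
  obtain ⟨j, hj⟩ := exists_indep_vars k (n+1) I hprime (κ+1) hdim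
  set H := MvPolynomial.homogeneousSubmodule (Fin (n+1)) k d with hH
  have hfin : Module.Finite k H :=
    Module.Finite.iff_fg.mpr (MvPolynomial.homogeneousSubmodule_fg _ _ d)
  let S := (Finset.univ : Finset (Fin (κ+1))).finsuppAntidiag d
  have hmem : ∀ m : S, rename j (monomial m.1 (1 : k)) ∈ H := by
    intro m
    have hm := (Finset.mem_finsuppAntidiag.mp m.2).1
    have : (monomial m.1 (1 : k)).IsHomogeneous d := by
      apply isHomogeneous_monomial
      rw [Finsupp.degree_eq_sum]
      exact hm
    exact this.rename_isHomogeneous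
  let N := Submodule.comap H.subtype (Submodule.restrictScalars k I)
  let v : S → (H ⧸ N) := fun m => N.mkQ ⟨rename j (monomial m.1 (1 : k)), hmem m⟩
  let L : H →ₗ[k] (MvPolynomial (Fin (n+1)) k ⧸ I) :=
    (Ideal.Quotient.mkₐ k I).toLinearMap ∘ₗ H.subtype
  have hL : N ≤ LinearMap.ker L := by
    intro a ha
    exact Ideal.Quotient.eq_zero_iff_mem.mpr ha
  have hv : LinearIndependent k v := by
    apply LinearIndependent.of_comp (N.liftQ L hL)
    have h0 : LinearIndependent k (fun m : S => (monomial m.1 (1 : k))) :=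
      ((MvPolynomial.basisMonomials (Fin (κ+1)) k).linearIndependent.comp
        (fun m : S => m.1) Subtype.val_injective)
    have h1 := h0.map' (aeval (R := k)
      (fun i => Ideal.Quotient.mkₐ k I (X (j i)))).toLinearMap
      (LinearMap.ker_eq_bot.mpr hj)
    have heq : (N.liftQ L hL) ∘ v = (aeval (R := k)
        (fun i => Ideal.Quotient.mkₐ k I (X (j i)))).toLinearMap ∘
          (fun m : S => (monomial m.1 (1 : k))) := by
      funext m
      change Ideal.Quotient.mkₐ k I (rename j (monomial m.1 (1 : k))) = aeval _ _
      rw [← AlgHom.comp_apply]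
      congr 1
      ext i
      simp
    rw [heq]
    exact h1
  have hc := hv.fintype_card_le_finrank
  have hS : Fintype.card S = (d + κ).choose κ := by
    rw [Fintype.card_coe, Finset.card_finsuppAntidiag_nat_eq_choose, Finset.card_univ,
      Fintype.card_fin, show κ + 1 + d - 1 = d + κ by omega, Nat.choose_symm_add]
  rw [hS] at hc
  exact hc
end

section
/- Let k be a field of characteristic 0 and let n ≥ 2, d ≥ 1 be integers. Inside the binom(n+d, n)-dimensional k-vector space of homogeneous degree-d polynomials F in x_0,…,x_n, the subset W = {F : (∂F/∂x_i)(a,0,…,0,b) = 0 for all i = 0,…,n and all a,b ∈ k} of polynomials whose zero locus is singular along the line x_1 = ⋯ = x_{n−1} = 0 is a k-linear subspace of codimension exactly nd+1. -/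
open MvPolynomial

/-- The point `(a, 0, …, 0, b)` of the line `x_1 = ⋯ = x_{n-1} = 0` in `k^{n+1}`. -/
def linePt {k : Type} [Field k] (n : ℕ) (a b : k) : Fin (n+1) → k :=
  fun l => if l = 0 then a else if l = Fin.last n then b else 0

/-- exponent vector of `x_0^j x_n^l` -/
noncomputable def expP (n j l : ℕ) : Fin (n+1) →₀ ℕ :=
  Finsupp.single 0 j + Finsupp.single (Fin.last n) l

theorem eval_line_sum {k : Type} [Field k] (n e : ℕ) (hn : 1 ≤ n)
    (G : MvPolynomial (Fin (n+1)) k) (hG : G.IsHomogeneous e) (a b : k) :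
    eval (linePt n a b) G =
      ∑ q ∈ Finset.HasAntidiagonal.antidiagonal e, coeff (expP n q.1 q.2) G * (a ^ q.1 * b ^ q.2) := by
  classical
  have hl0 : (Fin.last n) ≠ 0 := by
    intro h
    have := congrArg Fin.val h
    simp at this
    omega
  have hP0 : ∀ j l, expP n j l 0 = j := by
    intro j l; simp [expP, Finsupp.single_apply, hl0]
  have hPl : ∀ j l, expP n j l (Fin.last n) = l := by
    intro j l; simp [expP, Finsupp.single_apply, hl0.symm]
  have hPm : ∀ j l i, i ≠ 0 → i ≠ Fin.last n → expP n j l i = 0 := by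
    intro j l i h1 h2; simp [expP, Finsupp.single_apply, h1.symm, h2.symm]
  have hval : ∀ q : ℕ × ℕ, ∏ i, linePt n a b i ^ (expP n q.1 q.2 i) = a ^ q.1 * b ^ q.2 := by
    intro q
    rw [← Finset.prod_subset (Finset.subset_univ {0, Fin.last n}), Finset.prod_pair hl0.symm]
    · simp [hP0, hPl, linePt, hl0]
    · intro i _ hi
      simp only [Finset.mem_insert, Finset.mem_singleton, not_or] at hi
      rw [hPm _ _ _ hi.1 hi.2, pow_zero]
  rw [eval_eq']
  set f : (Fin (n+1) →₀ ℕ) → k := fun m => coeff m G * ∏ i, linePt n a b i ^ m i with hf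
  set I := (Finset.HasAntidiagonal.antidiagonal e).image (fun q : ℕ × ℕ => expP n q.1 q.2) with hI
  have h1 : ∑ m ∈ G.support, f m = ∑ m ∈ G.support ∪ I, f m := by
    apply Finset.sum_subset Finset.subset_union_left
    intro m _ hm
    simp [hf, notMem_support_iff.mp hm]
  have h2 : ∑ m ∈ I, f m = ∑ m ∈ G.support ∪ I, f m := by
    apply Finset.sum_subset Finset.subset_union_right
    intro m _ hm
    by_contra hne
    apply hm
    have hc : coeff m G ≠ 0 := left_ne_zero_of_mul hne
    have hp := right_ne_zero_of_mul hne
    rw [Finset.prod_ne_zero_iff] at hp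
    have hmid : ∀ i, i ≠ 0 → i ≠ Fin.last n → m i = 0 := by
      intro i h0 hl
      by_contra hmi
      apply hp i (Finset.mem_univ _)
      simp [linePt, h0, hl, hmi]
    have hm' : m = expP n (m 0) (m (Fin.last n)) := by
      ext i
      by_cases h0 : i = 0
      · subst h0; rw [hP0]
      by_cases hl : i = Fin.last n
      · subst hl; rw [hPl]
      rw [hmid i h0 hl, hPm _ _ _ h0 hl]
    have hdeg : m.degree = e := by
      by_contra hd
      exact hc (hG.coeff_eq_zero hd)
    rw [hI, Finset.mem_image]
    refine ⟨(m 0, m (Fin.last n)), ?_, hm'.symm⟩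
    rw [Finset.HasAntidiagonal.mem_antidiagonal, ← hdeg]
    conv_rhs => rw [hm']
    simp [expP, Finsupp.degree_single]
  change ∑ m ∈ G.support, f m = _
  rw [h1, ← h2, hI, Finset.sum_image]
  · apply Finset.sum_congr rfl
    intro q _
    simp only [hf, hval]
  · intro q _ q' _ h
    ext
    · simpa [hP0] using DFunLike.congr_fun h 0
    · simpa [hPl] using DFunLike.congr_fun h (Fin.last n)

theorem eval_line_zero_iff {k : Type} [Field k] [CharZero k] (n e : ℕ) (hn : 1 ≤ n)
    (G : MvPolynomial (Fin (n+1)) k) (hG : G.IsHomogeneous e) :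
    (∀ a b : k, eval (linePt n a b) G = 0) ↔
      ∀ j l, j + l = e → coeff (expP n j l) G = 0 := by
  constructor
  · intro h j l hjl
    set p : Polynomial k := ∑ q ∈ Finset.HasAntidiagonal.antidiagonal e,
      Polynomial.monomial q.1 (coeff (expP n q.1 q.2) G) with hp
    have hp0 : p = 0 := by
      apply Polynomial.funext
      intro a
      have := h a 1
      rw [eval_line_sum n e hn G hG] at this
      simpa [hp, Polynomial.eval_finsetSum] using this
    have hc := congrArg (fun r => Polynomial.coeff r j) hp0
    simp only [hp, Polynomial.finsetSum_coeff, Polynomial.coeff_monomial,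
      Polynomial.coeff_zero] at hc
    rw [Finset.sum_eq_single (j, l)] at hc
    · simpa using hc
    · intro q hq hne
      rw [if_neg]
      intro hj
      apply hne
      rw [Finset.HasAntidiagonal.mem_antidiagonal] at hq
      ext
      · exact hj
      · change q.2 = l
        omega
    · intro hq
      exact absurd (Finset.HasAntidiagonal.mem_antidiagonal.mpr hjl) hq
  · intro h a b
    rw [eval_line_sum n e hn G hG]
    apply Finset.sum_eq_zero
    intro q hq
    rw [h _ _ (Finset.HasAntidiagonal.mem_antidiagonal.mp hq), zero_mul]

/-- The exponents of the monomials of degree at most one in the middle variables. -/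
noncomputable def expE (m e : ℕ) : Fin (e+2) ⊕ (Fin m × Fin (e+1)) → (Fin (m+1+1) →₀ ℕ)
  | Sum.inl j => expP (m+1) j (e + 1 - j)
  | Sum.inr q => expP (m+1) q.2 (e - q.2) + Finsupp.single q.1.castSucc.succ 1

theorem expE_zero (m e : ℕ) (s : Fin (e+2) ⊕ (Fin m × Fin (e+1))) :
    expE m e s 0 = Sum.elim (fun j : Fin (e+2) => (j : ℕ)) (fun q : Fin m × Fin (e+1) => (q.2 : ℕ)) s := by
  rcases s with j | q
  · simp [expE, expP, Finsupp.single_apply, Fin.ext_iff]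
  · simp [expE, expP, Finsupp.single_apply, Fin.ext_iff]

theorem expE_mid (m e : ℕ) (s) (i : Fin m) : expE m e s i.castSucc.succ =
    Sum.elim (fun _ => 0) (fun q => if q.1 = i then 1 else 0) s := by
  have hi : m ≠ (i : ℕ) := by have := i.isLt; omega
  rcases s with j | q
  · simp [expE, expP, Finsupp.single_apply, Fin.ext_iff, hi]
  · simp [expE, expP, Finsupp.single_apply, Fin.ext_iff, hi]

theorem expE_inj (m e : ℕ) : Function.Injective (expE m e) := by
  intro s t h
  have h0 := DFunLike.congr_fun h 0
  have hm := fun i : Fin m => DFunLike.congr_fun h i.castSucc.succ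
  rw [expE_zero, expE_zero] at h0
  simp only [expE_mid] at hm
  rcases s with j | q <;> rcases t with j' | q'
  · simp at h0
    rw [Fin.ext h0]
  · have := hm q'.1
    simp at this
  · have := hm q.1
    simp at this
  · have := hm q.1
    simp at this h0
    congr 1
    ext
    · rw [this]
    · exact h0

theorem expE_deg (m e : ℕ) (s) : (expE m e s).degree = e + 1 := by
  rcases s with j | q
  · have := j.isLt
    simp only [expE, expP, map_add, Finsupp.degree_single]
    omega
  · have := q.2.isLt
    simp only [expE, expP, map_add, Finsupp.degree_single]
    omega

/-- Inside the space of homogeneous degree-`d` polynomials in `x_0, …, x_n` (over a field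
of characteristic zero, with `n ≥ 2`, `d ≥ 1`), the set of `F` whose zero locus is
singular along the line `x_1 = ⋯ = x_{n-1} = 0`, i.e. such that all partial derivatives
`∂F/∂x_i` vanish at every point `(a,0,…,0,b)`, is a `k`-linear subspace of codimension
exactly `nd+1`. -/
theorem stmt5 (k : Type) [Field k] [CharZero k] (n d : ℕ) (hn : 2 ≤ n) (hd : 1 ≤ d) :
    ∃ W : Submodule k (MvPolynomial.homogeneousSubmodule (Fin (n+1)) k d),
      (∀ F : MvPolynomial.homogeneousSubmodule (Fin (n+1)) k d,
        F ∈ W ↔ ∀ (i : Fin (n+1)) (a b : k),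
          eval (linePt n a b) (pderiv i (F : MvPolynomial (Fin (n+1)) k)) = 0) ∧
      Module.finrank k ((MvPolynomial.homogeneousSubmodule (Fin (n+1)) k d) ⧸ W) =
        n * d + 1 := by
  classical
  obtain ⟨m, rfl⟩ : ∃ m, n = m + 1 := ⟨n - 1, by omega⟩
  obtain ⟨e, rfl⟩ : ∃ e, d = e + 1 := ⟨d - 1, by omega⟩
  let L : MvPolynomial.homogeneousSubmodule (Fin (m+1+1)) k (e+1) →ₗ[k]
      (Fin (e+2) ⊕ (Fin m × Fin (e+1)) → k) :=
    LinearMap.pi fun s => (MvPolynomial.lcoeff k (expE m e s)).comp (Submodule.subtype _)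
  have hL : ∀ F s, L F s = coeff (expE m e s) (F : MvPolynomial (Fin (m+1+1)) k) :=
    fun F s => rfl
  refine ⟨LinearMap.ker L, ?_, ?_⟩
  · rintro ⟨F, hF⟩
    have hF' : F.IsHomogeneous (e+1) := hF
    have key : ∀ i, (∀ a b : k, eval (linePt (m+1) a b) (pderiv i F) = 0) ↔
        ∀ j l, j + l = e → coeff (expP (m+1) j l + Finsupp.single i 1) F = 0 := by
      intro i
      have hh : (pderiv i F).IsHomogeneous e := hF'.pderiv
      rw [eval_line_zero_iff (m+1) e (by omega) _ hh]
      refine forall_congr' fun j => forall_congr' fun l => forall_congr' fun _ => ?_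
      rw [coeff_pderiv, mul_eq_zero, or_iff_left]
      exact Nat.cast_add_one_ne_zero _
    simp only [key]
    rw [LinearMap.mem_ker, _root_.funext_iff]
    simp only [hL, Pi.zero_apply]
    have e0 : ∀ j l, expP (m+1) j l + Finsupp.single 0 1 = expP (m+1) (j+1) l := by
      intro j l
      simp only [expP, Finsupp.single_add]; abel
    have el : ∀ j l, expP (m+1) j l + Finsupp.single (Fin.last (m+1)) 1
        = expP (m+1) j (l+1) := by
      intro j l
      simp only [expP, Finsupp.single_add]; abel
    constructor
    · intro h
      have hp : ∀ j l, j + l = e + 1 → coeff (expP (m+1) j l) F = 0 := by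
        intro j l hjl
        have := h (Sum.inl ⟨j, by omega⟩)
        simp only [expE] at this
        rwa [show e + 1 - j = l by omega] at this
      intro i j l hjl
      refine Fin.cases ?_ (fun i => ?_) i
      · rw [e0]; exact hp _ _ (by omega)
      · refine Fin.lastCases ?_ (fun i => ?_) i
        · rw [Fin.succ_last, el]; exact hp _ _ (by omega)
        · have := h (Sum.inr (i, ⟨j, by omega⟩))
          simp only [expE] at this
          rwa [show e - j = l by omega] at this
    · intro h s
      rcases s with ⟨j, hj⟩ | ⟨i, j, hj⟩
      · simp only [expE]
        rcases j with _ | j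
        · have := h (Fin.last (m+1)) 0 e (by omega)
          rwa [el] at this
        · have := h 0 j (e - j) (by omega)
          rw [e0] at this
          rwa [show e + 1 - (j + 1) = e - j by omega]
      · exact h _ j (e - j) (by omega)
  · have hsurj : Function.Surjective L := by
      intro v
      refine ⟨⟨∑ s, monomial (expE m e s) (v s), ?_⟩, ?_⟩
      · apply Submodule.sum_mem
        intro s _
        exact isHomogeneous_monomial _ (expE_deg m e s)
      · ext s
        rw [hL]
        simp only [coeff_sum, coeff_monomial, (expE_inj m e).eq_iff]
        rw [Finset.sum_ite_eq' Finset.univ s v, if_pos (Finset.mem_univ s)]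
    rw [(L.quotKerEquivOfSurjective hsurj).finrank_eq]
    simp
    ring
end

section
/- Let n, d be integers with n+1 ≤ 2d and d ≤ n−2, and let e be a real number with 1 ≤ e and e(n−d+1) ≤ n+1. Then n(n−1) − 4en + e(e+1)(n−d+1) + 2d − 2e + 2 > 0. -/
/-- The final arithmetic estimate: for integers `n, d` with `(n+1)/2 ≤ d ≤ n-2` and a
real number `e` with `1 ≤ e` and `e(n-d+1) ≤ n+1` (i.e. `e` at most the threshold
degree), one has `n(n-1) - 4en + e(e+1)(n-d+1) + 2d - 2e + 2 > 0`. -/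
theorem stmt15 (n d : ℤ) (e : ℝ) (h1 : n + 1 ≤ 2*d) (h2 : d ≤ n - 2)
    (h3 : 1 ≤ e) (h4 : e * ((n : ℝ) - (d : ℝ) + 1) ≤ (n : ℝ) + 1) :
    (n : ℝ) * ((n : ℝ) - 1) - 4*e*(n : ℝ) + e*(e+1)*((n : ℝ) - (d : ℝ) + 1)
      + 2*(d : ℝ) - 2*e + 2 > 0 := by
  have h1' : (n : ℝ) + 1 ≤ 2 * d := by exact_mod_cast h1
  have h2' : (d : ℝ) ≤ n - 2 := by exact_mod_cast h2
  obtain ⟨k, hk⟩ : ∃ k : ℝ, k = (n : ℝ) - d + 1 := ⟨_, rfl⟩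
  obtain ⟨m, hm⟩ : ∃ m : ℝ, m = (n : ℝ) + 1 := ⟨_, rfl⟩
  have hn : (n : ℝ) = m - 1 := by linarith
  have hd : (d : ℝ) = m - k := by linarith
  rw [hn, hd] at *
  have hk3 : 3 ≤ k := by linarith
  have hmk : 2 * k ≤ m := by linarith
  have hu : e * k ≤ m := by nlinarith
  have hA : 0 ≤ (m - e * k) * (3 * m - e * k - k - 2) :=
    mul_nonneg (by linarith) (by linarith)
  have hB : 0 < (k - 3) * m ^ 2 + 2 * m + 4 * k - 2 * k ^ 2 := by
    have q1 : (2 * k) ^ 2 ≤ m ^ 2 := pow_le_pow_left₀ (by linarith) hmk 2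
    have q2 := mul_le_mul_of_nonneg_left q1 (by linarith : 0 ≤ k - 3)
    have q3 : 0 < k * (2 * k ^ 2 - 7 * k + 4) :=
      mul_pos (by linarith) (by nlinarith)
    nlinarith
  have hk0 : 0 < k := by linarith
  refine pos_of_mul_pos_right (a := k) ?_ hk0.le
  linear_combination hA + hB
end
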